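/- The pair (u, p) of the Stokes flow past a sphere satisfies the homogeneous Stokes momentum equation away from the origin: for every x ∈ ℝ³ with x ≠ 0 and each component i = 1, 2, 3, ν·(∂²uᵢ/∂x₁²(x) + ∂²uᵢ/∂x₂²(x) + ∂²uᵢ/∂x₃²(x)) = ∂p/∂xᵢ(x); that is, −ν Δu + ∇p = 0 on ℝ³ ∖ {0}. -/

import Mathlib

abbrev E3 := EuclideanSpace ℝ (Fin 3)

lemma hq_aux (x : E3) (hx : x ≠ 0) :
    HasFDerivAt (fun y : E3 => ‖y‖⁻¹) (-(‖x‖⁻¹ ^ 3) • innerSL ℝ x) x := by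
  have hn : ‖x‖ ≠ 0 := norm_ne_zero_iff.mpr hx
  have h1 : HasFDerivAt (fun y : E3 => ‖y‖ ^ 2) (2 • innerSL ℝ x) x :=
    (hasStrictFDerivAt_norm_sq x).hasFDerivAt
  have h2 := (hasDerivAt_inv (x := √(‖x‖ ^ 2)) (by
    rw [Real.sqrt_sq (norm_nonneg x)]; exact hn)).comp_hasFDerivAt x (h1.sqrt (by positivity))
  have h3 : (fun y : E3 => (√(‖y‖ ^ 2))⁻¹) = fun y : E3 => ‖y‖⁻¹ := by
    funext y; rw [Real.sqrt_sq (norm_nonneg y)]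
  rw [← h3]
  refine HasFDerivAt.congr_fderiv h2 ?_
  ext e
  simp [Real.sqrt_sq (norm_nonneg x)]
  field_simp

lemma hc_aux (k : Fin 3) (x : E3) :
    HasFDerivAt (fun y : E3 => y k) (EuclideanSpace.proj k : E3 →L[ℝ] ℝ) x :=
  (EuclideanSpace.proj k : E3 →L[ℝ] ℝ).hasFDerivAt

lemma first_aux (c a b δ : ℝ) (i j : Fin 3) (y : E3) (hy : y ≠ 0) :
    fderiv ℝ (fun z : E3 => c - a * (δ * ‖z‖⁻¹ + z 0 * z i * ‖z‖⁻¹ ^ 3)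
      - b * (δ * ‖z‖⁻¹ ^ 3 - 3 * (z 0 * z i * ‖z‖⁻¹ ^ 5))) y (EuclideanSpace.single j 1) =
    -a * (-(δ * (y j * ‖y‖⁻¹ ^ 3)) + ((EuclideanSpace.single j 1 : E3) 0 * y i
        + (EuclideanSpace.single j 1 : E3) i * y 0) * ‖y‖⁻¹ ^ 3
        - 3 * (y 0 * y i * y j * ‖y‖⁻¹ ^ 5))
    - b * (-(3 * δ * (y j * ‖y‖⁻¹ ^ 5)) - 3 * (((EuclideanSpace.single j 1 : E3) 0 * y i
        + (EuclideanSpace.single j 1 : E3) i * y 0) * ‖y‖⁻¹ ^ 5)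
        + 15 * (y 0 * y i * y j * ‖y‖⁻¹ ^ 7)) := by
  have q := hq_aux y hy
  have m := (hc_aux 0 y).mul (hc_aux i y)
  have H := (((((q.const_mul δ).add (m.mul (q.pow 3))).const_mul a).const_sub c).sub
    ((((q.pow 3).const_mul δ).sub ((m.mul (q.pow 5)).const_mul 3)).const_mul b))
  erw [H.fderiv]
  simp [EuclideanSpace.inner_single_right]
  split_ifs <;> ring

lemma second_aux (a b δ d₀ d₁ : ℝ) (i j : Fin 3) (y : E3) (hy : y ≠ 0) :
    fderiv ℝ (fun y : E3 => 
    -a * (-(δ * (y j * ‖y‖⁻¹ ^ 3)) + (d₀ * y i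
        + d₁ * y 0) * ‖y‖⁻¹ ^ 3
        - 3 * (y 0 * y i * y j * ‖y‖⁻¹ ^ 5))
    - b * (-(3 * δ * (y j * ‖y‖⁻¹ ^ 5)) - 3 * ((d₀ * y i
        + d₁ * y 0) * ‖y‖⁻¹ ^ 5)
        + 15 * (y 0 * y i * y j * ‖y‖⁻¹ ^ 7))) y (EuclideanSpace.single j 1) =
    -a * (-(δ * (‖y‖⁻¹ ^ 3 - 3 * y j ^ 2 * ‖y‖⁻¹ ^ 5))
        + (d₀ * (EuclideanSpace.single j 1 : E3) i + d₁ * (EuclideanSpace.single j 1 : E3) 0)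
            * ‖y‖⁻¹ ^ 3
        - 3 * (d₀ * y i + d₁ * y 0) * y j * ‖y‖⁻¹ ^ 5
        - 3 * (((EuclideanSpace.single j 1 : E3) 0 * y i
          + (EuclideanSpace.single j 1 : E3) i * y 0) * y j + y 0 * y i) * ‖y‖⁻¹ ^ 5
        + 15 * (y 0 * y i * y j ^ 2 * ‖y‖⁻¹ ^ 7))
    - b * (-(3 * δ * (‖y‖⁻¹ ^ 5 - 5 * y j ^ 2 * ‖y‖⁻¹ ^ 7))
        - 3 * ((d₀ * (EuclideanSpace.single j 1 : E3) i
            + d₁ * (EuclideanSpace.single j 1 : E3) 0) * ‖y‖⁻¹ ^ 5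
        - 5 * (d₀ * y i + d₁ * y 0) * y j * ‖y‖⁻¹ ^ 7)
        + 15 * (((EuclideanSpace.single j 1 : E3) 0 * y i
          + (EuclideanSpace.single j 1 : E3) i * y 0) * y j + y 0 * y i) * ‖y‖⁻¹ ^ 7
        - 105 * (y 0 * y i * y j ^ 2 * ‖y‖⁻¹ ^ 9)) := by
  have q := hq_aux y hy
  have m := ((hc_aux 0 y).mul (hc_aux i y)).mul (hc_aux j y)
  have l := ((hc_aux i y).const_mul d₀).add ((hc_aux 0 y).const_mul d₁)
  have H := ((((((hc_aux j y).mul (q.pow 3)).const_mul δ).neg.add (l.mul (q.pow 3))).sub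
      ((m.mul (q.pow 5)).const_mul 3)).const_mul (-a)).sub
    ((((((hc_aux j y).mul (q.pow 5)).const_mul (3 * δ)).neg.sub
      ((l.mul (q.pow 5)).const_mul 3)).add ((m.mul (q.pow 7)).const_mul 15)).const_mul b)
  erw [H.fderiv]
  simp [EuclideanSpace.inner_single_right]
  split_ifs <;> ring

lemma press_aux (c a : ℝ) (j : Fin 3) (y : E3) (hy : y ≠ 0) :
    fderiv ℝ (fun z : E3 => c - a * (z 0 * ‖z‖⁻¹ ^ 3)) y (EuclideanSpace.single j 1) =
    -a * ((EuclideanSpace.single j 1 : E3) 0 * ‖y‖⁻¹ ^ 3 - 3 * (y 0 * y j * ‖y‖⁻¹ ^ 5)) := by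
  have q := hq_aux y hy
  have H := (((hc_aux 0 y).mul (q.pow 3)).const_mul a).const_sub c
  erw [H.fderiv]
  simp [EuclideanSpace.inner_single_right]
  split_ifs <;> ring

lemma lap_aux (c a b δ : ℝ) (i j : Fin 3) (x : E3) (hx : x ≠ 0) :
    fderiv ℝ (fun y => fderiv ℝ (fun z : E3 => c - a * (δ * ‖z‖⁻¹ + z 0 * z i * ‖z‖⁻¹ ^ 3)
      - b * (δ * ‖z‖⁻¹ ^ 3 - 3 * (z 0 * z i * ‖z‖⁻¹ ^ 5))) y (EuclideanSpace.single j 1)) x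
      (EuclideanSpace.single j 1) =
    fderiv ℝ (fun y : E3 =>
    -a * (-(δ * (y j * ‖y‖⁻¹ ^ 3)) + ((EuclideanSpace.single j 1 : E3) 0 * y i
        + (EuclideanSpace.single j 1 : E3) i * y 0) * ‖y‖⁻¹ ^ 3
        - 3 * (y 0 * y i * y j * ‖y‖⁻¹ ^ 5))
    - b * (-(3 * δ * (y j * ‖y‖⁻¹ ^ 5)) - 3 * (((EuclideanSpace.single j 1 : E3) 0 * y i
        + (EuclideanSpace.single j 1 : E3) i * y 0) * ‖y‖⁻¹ ^ 5)
        + 15 * (y 0 * y i * y j * ‖y‖⁻¹ ^ 7))) x (EuclideanSpace.single j 1) :=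
  congrArg (fun L : E3 →L[ℝ] ℝ => L (EuclideanSpace.single j 1))
    (Filter.EventuallyEq.fderiv_eq (𝕜 := ℝ) ((eventually_ne_nhds hx).mono
      fun y hy => first_aux c a b δ i j y hy))


/-- The velocity field of the analytical Stokes flow past a sphere of radius `R` in a
uniform stream of speed `v∞` (Cartesian form). -/
noncomputable def stokesSphereVelocity (R v : ℝ) (x : EuclideanSpace ℝ (Fin 3)) :
    EuclideanSpace ℝ (Fin 3) :=
  v • EuclideanSpace.single (0 : Fin 3) (1 : ℝ) -
    (3 * R * v / 4) • ((1 / ‖x‖) • EuclideanSpace.single (0 : Fin 3) (1 : ℝ) +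
      (x 0 / ‖x‖ ^ 3) • x) -
    (R ^ 3 * v / 4) • ((1 / ‖x‖ ^ 3) • EuclideanSpace.single (0 : Fin 3) (1 : ℝ) -
      (3 * x 0 / ‖x‖ ^ 5) • x)

/-- The pressure field of the analytical Stokes flow past a sphere of radius `R` in a
uniform stream of speed `v∞`, kinematic viscosity `ν` and far-field pressure `pinf`. -/
noncomputable def stokesSpherePressure (R ν v pinf : ℝ) (x : EuclideanSpace ℝ (Fin 3)) : ℝ :=
  pinf - (3 * ν * R * v / 2) * x 0 / ‖x‖ ^ 3

/-- The pair `(u, p)` of the Stokes flow past a sphere satisfies the homogeneous Stokes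
momentum equation away from the origin: `−ν Δu + ∇p = 0` on `ℝ³ ∖ {0}`, i.e. for each
component `i` and each `x ≠ 0`, `ν·Δuᵢ(x) = ∂p/∂xᵢ(x)`. -/
theorem stokesSphere_momentum (R ν v pinf : ℝ) (hR : 0 < R) (hν : 0 < ν)
    (x : EuclideanSpace ℝ (Fin 3)) (hx : x ≠ 0) (i : Fin 3) :
    ν * (fderiv ℝ (fun y => fderiv ℝ (fun z => stokesSphereVelocity R v z i) y
          (EuclideanSpace.single 0 1)) x (EuclideanSpace.single 0 1) +
        fderiv ℝ (fun y => fderiv ℝ (fun z => stokesSphereVelocity R v z i) y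
          (EuclideanSpace.single 1 1)) x (EuclideanSpace.single 1 1) +
        fderiv ℝ (fun y => fderiv ℝ (fun z => stokesSphereVelocity R v z i) y
          (EuclideanSpace.single 2 1)) x (EuclideanSpace.single 2 1)) =
      fderiv ℝ (stokesSpherePressure R ν v pinf) x (EuclideanSpace.single i 1) := by
  have hu : (fun z => stokesSphereVelocity R v z i) = fun z : E3 =>
      v * (EuclideanSpace.single (0 : Fin 3) (1 : ℝ) : E3) i - (3 * R * v / 4) *
        ((EuclideanSpace.single (0 : Fin 3) (1 : ℝ) : E3) i * ‖z‖⁻¹ + z 0 * z i * ‖z‖⁻¹ ^ 3)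
      - (R ^ 3 * v / 4) * ((EuclideanSpace.single (0 : Fin 3) (1 : ℝ) : E3) i * ‖z‖⁻¹ ^ 3
        - 3 * (z 0 * z i * ‖z‖⁻¹ ^ 5)) := by
    funext z
    simp only [stokesSphereVelocity, PiLp.sub_apply, PiLp.add_apply, PiLp.smul_apply, smul_eq_mul,
      div_eq_mul_inv, inv_pow]
    ring
  have hp : stokesSpherePressure R ν v pinf = fun z : E3 =>
      pinf - (3 * ν * R * v / 2) * (z 0 * ‖z‖⁻¹ ^ 3) := by
    funext z
    simp only [stokesSpherePressure, div_eq_mul_inv, inv_pow]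
    ring
  have hn : ‖x‖ ≠ 0 := norm_ne_zero_iff.mpr hx
  have hS : (x 0 ^ 2 + x 1 ^ 2 + x 2 ^ 2) * ‖x‖⁻¹ ^ 2 = 1 := by
    have h := EuclideanSpace.norm_sq_eq x
    simp only [Fin.sum_univ_three, Real.norm_eq_abs, sq_abs] at h
    rw [← h]
    field_simp
  rw [hu, hp, press_aux _ _ _ _ hx, lap_aux _ _ _ _ _ _ _ hx, lap_aux _ _ _ _ _ _ _ hx,
    lap_aux _ _ _ _ _ _ _ hx, second_aux _ _ _ _ _ _ _ _ hx, second_aux _ _ _ _ _ _ _ _ hx,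
    second_aux _ _ _ _ _ _ _ _ hx]
  generalize ‖x‖⁻¹ = q at hS ⊢
  fin_cases i
  · simp
    linear_combination ν * (-(3 * R * v / 4) * (3 * q ^ 3 + 15 * x 0 * x 0 * q ^ 5)
      - (R ^ 3 * v / 4) * (15 * q ^ 5 - 105 * x 0 * x 0 * q ^ 7)) * hS
  · simp
    linear_combination ν * (-(3 * R * v / 4) * (15 * x 0 * x 1 * q ^ 5)
      - (R ^ 3 * v / 4) * (- 105 * x 0 * x 1 * q ^ 7)) * hS
  · simp
    linear_combination ν * (-(3 * R * v / 4) * (15 * x 0 * x 2 * q ^ 5)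
      - (R ^ 3 * v / 4) * (- 105 * x 0 * x 2 * q ^ 7)) * hS
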